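/- Let T: Lip(X,E) → Lip(Y,F) be a linear biseparating map. Then there exist a homeomorphism h: Y → X and, for each y ∈ Y, a linear bijection Jy: E → F given by Jy(e) = (Tê)(y), such that (Tf)(y) = Jy(f(h(y))) for every f ∈ Lip(X,E) and every y ∈ Y. -/

import Mathlib

/-!
Call `x : X` and `y : Y` *linked* if arbitrarily close to `x` there live nonzero Lipschitz functions
`f` with `T f` living arbitrarily close to `y`. The relation is symmetric under passing to `T⁻¹`,
and since `T` is separating, `T f y` depends only on the germ of `f` at `x` when `x` and `y` are
linked (`Linked.eq_zero`).

* The graph of `h`. Let `w` be the preimage of a nonzero constant function `u`. For every Lipschitz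
  cutoff `φ`, the function `T (φ • w)` is continuous, equal to `u` at points linked to where `φ = 1`
  locally and to `0` at points linked to where `φ = 0` locally. This shows that a point `y` is
  linked to at most one `x`, depending continuously on `y` (`Linked.eventually_dist_lt`). The same
  argument shows that, if nonzero functions `f n` have images living in balls shrinking to `y`, then
  points `p n` with `f n (p n) ≠ 0` cannot visit infinitely often two sets at positive distance;
  such a sequence is Cauchy (`cauchySeq_of_proximity`) and its limit is linked to `y`
  (`IsBisep.exists_linked`). Applied to `T` and `T⁻¹`, this gives the homeomorphism `h`.

* From germs to values. If `f (h y) = 0` then `T f y = 0` (`IsBisep.apply_eq_zero`): multiply `f` by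
  a cutoff oscillating between `1` and `0` near `h y`. The product is still Lipschitz because
  `f` vanishes at `h y` (`isLip_ramp_smul`), so its image is continuous at `y`, with `T f y` and `0`
  both as limits. Applying this to `f - f (h y)` gives the representation. For the
  maps `e ↦ T ê y`, it gives surjectivity when evaluated at preimages of constants, and the same
  representation of `T⁻¹` gives injectivity.
-/

open Metric Set Function Bornology
open scoped NNReal

/-- `f` is a bounded Lipschitz function. -/
def IsLip {X E : Type*} [PseudoMetricSpace X] [NormedAddCommGroup E] (f : X → E) : Prop :=
  (∃ K : ℝ≥0, LipschitzWith K f) ∧ ∃ C : ℝ, ∀ x, ‖f x‖ ≤ C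

/-- The cozero set of `f`. -/
def coz {X E : Type*} [Zero E] (f : X → E) : Set X := {x | f x ≠ 0}

/-- The norm `‖f‖_L = max {‖f‖_∞, L(f)}` on bounded Lipschitz functions. -/
noncomputable def lipNorm {X E : Type*} [PseudoMetricSpace X] [NormedAddCommGroup E]
    (f : X → E) : ℝ :=
  max (⨆ x, ‖f x‖) (⨆ p : X × X, ‖f p.1 - f p.2‖ / dist p.1 p.2)

/-- `T` is a linear biseparating map from `Lip(X,E)` onto `Lip(Y,F)`:
it maps bounded Lipschitz functions to bounded Lipschitz functions, is linear,
restricts to a bijection between the spaces of bounded Lipschitz functions, and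
both `T` and its inverse are separating (disjointness preserving). -/
structure IsBisep (𝕂 : Type*) {X Y E F : Type*} [RCLike 𝕂]
    [PseudoMetricSpace X] [PseudoMetricSpace Y]
    [NormedAddCommGroup E] [NormedSpace 𝕂 E] [NormedAddCommGroup F] [NormedSpace 𝕂 F]
    (T : (X → E) → (Y → F)) : Prop where
  maps_lip : ∀ f, IsLip f → IsLip (T f)
  map_add : ∀ f g, IsLip f → IsLip g → T (f + g) = T f + T g
  map_smul : ∀ (c : 𝕂) (f : X → E), IsLip f → T (c • f) = c • T f
  inj : ∀ f g, IsLip f → IsLip g → T f = T g → f = g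
  surj : ∀ g, IsLip g → ∃ f, IsLip f ∧ T f = g
  sep : ∀ f g, IsLip f → IsLip g → coz f ∩ coz g = ∅ → coz (T f) ∩ coz (T g) = ∅
  sep_inv : ∀ f g, IsLip f → IsLip g → coz (T f) ∩ coz (T g) = ∅ → coz f ∩ coz g = ∅

open Filter Topology

/-! ### Bounded Lipschitz functions and cutoffs -/

section Lipschitz

variable {X E : Type*} [PseudoMetricSpace X] [NormedAddCommGroup E]

lemma IsLip.of_le {f : X → E} {K C : ℝ} (hK : ∀ x y, ‖f x - f y‖ ≤ K * dist x y)
    (hC : ∀ x, ‖f x‖ ≤ C) : IsLip f :=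
  ⟨⟨K.toNNReal, LipschitzWith.of_dist_le' fun x y => by rw [dist_eq_norm]; exact hK x y⟩, C, hC⟩

lemma IsLip.exists_bound {f : X → E} (hf : IsLip f) :
    ∃ K C : ℝ, 0 ≤ K ∧ 0 ≤ C ∧ (∀ x y, ‖f x - f y‖ ≤ K * dist x y) ∧ ∀ x, ‖f x‖ ≤ C := by
  obtain ⟨⟨K, hK⟩, C, hC⟩ := hf
  refine ⟨K, max C 0, K.2, le_max_right _ _, fun x y => ?_, fun x => (hC x).trans (le_max_left _ _)⟩
  rw [← dist_eq_norm]
  exact hK.dist_le_mul x y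

lemma IsLip.continuous {f : X → E} (hf : IsLip f) : Continuous f := by
  obtain ⟨⟨K, hK⟩, -⟩ := hf
  exact hK.continuous

lemma IsLip.const (e : E) : IsLip (fun _ : X => e) :=
  IsLip.of_le (K := 0) (C := ‖e‖) (by simp) (by simp)

lemma IsLip.add {f g : X → E} (hf : IsLip f) (hg : IsLip g) : IsLip (f + g) := by
  obtain ⟨K, C, -, -, h1, h2⟩ := hf.exists_bound
  obtain ⟨K', C', -, -, h1', h2'⟩ := hg.exists_bound
  refine IsLip.of_le (K := K + K') (C := C + C') (fun x y => ?_) fun x => ?_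
  · calc ‖(f + g) x - (f + g) y‖ = ‖(f x - f y) + (g x - g y)‖ := by
          congr 1; simp only [Pi.add_apply]; abel
      _ ≤ ‖f x - f y‖ + ‖g x - g y‖ := norm_add_le _ _
      _ ≤ (K + K') * dist x y := by linarith [h1 x y, h1' x y]
  · exact (norm_add_le _ _).trans (add_le_add (h2 x) (h2' x))

lemma IsLip.neg {f : X → E} (hf : IsLip f) : IsLip (-f) := by
  obtain ⟨K, C, -, -, h1, h2⟩ := hf.exists_bound
  refine IsLip.of_le (K := K) (C := C) (fun x y => ?_) fun x => ?_
  · calc ‖(-f) x - (-f) y‖ = ‖f x - f y‖ := by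
          rw [← norm_neg]; congr 1; simp only [Pi.neg_apply]; abel
      _ ≤ _ := h1 x y
  · simpa using h2 x

lemma IsLip.sub {f g : X → E} (hf : IsLip f) (hg : IsLip g) : IsLip (f - g) := by
  rw [sub_eq_add_neg]; exact hf.add hg.neg

variable {𝕂 : Type*} [RCLike 𝕂] [NormedSpace 𝕂 E]

lemma IsLip.const_smul (c : 𝕂) {f : X → E} (hf : IsLip f) : IsLip (c • f) := by
  obtain ⟨K, C, -, -, h1, h2⟩ := hf.exists_bound
  refine IsLip.of_le (K := ‖c‖ * K) (C := ‖c‖ * C) (fun x y => ?_) fun x => ?_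
  · rw [Pi.smul_apply, Pi.smul_apply, ← smul_sub, norm_smul, mul_assoc]
    exact mul_le_mul_of_nonneg_left (h1 x y) (norm_nonneg c)
  · rw [Pi.smul_apply, norm_smul]
    exact mul_le_mul_of_nonneg_left (h2 x) (norm_nonneg c)

variable (𝕂) in
lemma norm_ofReal_smul_sub_le (a b : ℝ) (u v : E) :
    ‖(a : 𝕂) • u - (b : 𝕂) • v‖ ≤ |a - b| * ‖u‖ + |b| * ‖u - v‖ := by
  calc ‖(a : 𝕂) • u - (b : 𝕂) • v‖ = ‖((a - b : ℝ) : 𝕂) • u + (b : 𝕂) • (u - v)‖ := by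
        congr 1; push_cast; rw [sub_smul, smul_sub]; abel
    _ ≤ ‖((a - b : ℝ) : 𝕂) • u‖ + ‖(b : 𝕂) • (u - v)‖ := norm_add_le _ _
    _ = _ := by rw [norm_smul, norm_smul, RCLike.norm_ofReal, RCLike.norm_ofReal]

variable (𝕂) in
lemma IsLip.ofReal_smul {φ : X → ℝ} {f : X → E} (hφ : IsLip φ) (hf : IsLip f) :
    IsLip (fun z => (φ z : 𝕂) • f z) := by
  obtain ⟨K, C, hK, hC, h1, h2⟩ := hφ.exists_bound
  obtain ⟨K', C', hK', hC', h1', h2'⟩ := hf.exists_bound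
  refine IsLip.of_le (K := K * C' + C * K') (C := C * C') (fun x y => ?_) fun x => ?_
  · have hd : 0 ≤ dist x y := dist_nonneg
    calc _ ≤ |φ x - φ y| * ‖f x‖ + |φ y| * ‖f x - f y‖ := norm_ofReal_smul_sub_le 𝕂 _ _ _ _
      _ ≤ (K * dist x y) * C' + C * (K' * dist x y) :=
          add_le_add (mul_le_mul (h1 x y) (h2' x) (norm_nonneg _) (by positivity))
            (mul_le_mul (h2 y) (h1' x y) (norm_nonneg _) hC)
      _ = _ := by ring
  · rw [norm_smul, RCLike.norm_ofReal]
    exact mul_le_mul (h2 x) (h2' x) (norm_nonneg _) hC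

/-- The ramp on `ℝ` equal to `1` on `(-∞, 1/4]`, to `0` on `[1/2, ∞)` and affine in between. -/
noncomputable def ramp (t : ℝ) : ℝ := max 0 (min 1 (2 - 4 * t))

lemma ramp_eq_one {t : ℝ} (h : t ≤ 1 / 4) : ramp t = 1 := by
  unfold ramp; rw [min_eq_left (by linarith)]; norm_num

lemma ramp_eq_zero {t : ℝ} (h : 1 / 2 ≤ t) : ramp t = 0 := by
  unfold ramp; exact max_eq_left ((min_le_right _ _).trans (by linarith))

lemma abs_ramp_le (t : ℝ) : |ramp t| ≤ 1 := by
  unfold ramp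
  rw [abs_of_nonneg (le_max_left _ _)]
  exact max_le zero_le_one (min_le_left _ _)

lemma abs_ramp_sub_le (s t : ℝ) : |ramp s - ramp t| ≤ 4 * |s - t| := by
  have h1 : |ramp s - ramp t| ≤ |min 1 (2 - 4 * s) - min 1 (2 - 4 * t)| := by
    simpa [ramp] using abs_max_sub_max_le_max (0 : ℝ) (min 1 (2 - 4 * s)) 0 (min 1 (2 - 4 * t))
  have h2 : |min 1 (2 - 4 * s) - min 1 (2 - 4 * t)| ≤ |(2 - 4 * s) - (2 - 4 * t)| := by
    simpa using abs_min_sub_min_le_max (1 : ℝ) (2 - 4 * s) 1 (2 - 4 * t)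
  have h3 : |(2 - 4 * s) - (2 - 4 * t)| = 4 * |s - t| := by
    rw [show (2 - 4 * s) - (2 - 4 * t) = (-4) * (s - t) by ring, abs_mul]; norm_num
  linarith

lemma abs_infDist_sub_le (A : Set X) (z w : X) : |infDist z A - infDist w A| ≤ dist z w := by
  simpa [Real.dist_eq] using (lipschitz_infDist_pt A).dist_le_mul z w

/-- A Lipschitz cutoff `φ` with `φ = 1` close to `A` and `φ = 0` at distance `≥ ε / 2` from `A`. -/
lemma exists_cutoff (A : Set X) {ε : ℝ} (hε : 0 < ε) :
    ∃ φ : X → ℝ, IsLip φ ∧ (∀ z, infDist z A ≤ ε / 4 → φ z = 1) ∧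
      ∀ z, ε / 2 ≤ infDist z A → φ z = 0 := by
  refine ⟨fun z => ramp (infDist z A / ε), ?_, fun z hz => ramp_eq_one ?_,
    fun z hz => ramp_eq_zero ?_⟩
  · refine IsLip.of_le (K := 4 / ε) (C := 1) (fun z w => ?_) fun z => abs_ramp_le _
    calc _ ≤ 4 * |infDist z A / ε - infDist w A / ε| := abs_ramp_sub_le _ _
      _ = 4 / ε * |infDist z A - infDist w A| := by
          rw [← sub_div, abs_div, abs_of_pos hε]; ring
      _ ≤ _ := mul_le_mul_of_nonneg_left (abs_infDist_sub_le A z w) (by positivity)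
  · rw [div_le_iff₀ hε]; linarith
  · rw [le_div_iff₀ hε]; linarith

lemma exists_bump {x : X} {U : Set X} (hU : U ∈ 𝓝 x) :
    ∃ φ : X → ℝ, IsLip φ ∧ (∀ᶠ z in 𝓝 x, φ z = 1) ∧ ∀ z, z ∉ U → φ z = 0 := by
  obtain ⟨ε, hε, hεU⟩ := Metric.mem_nhds_iff.1 hU
  obtain ⟨φ, h1, h2, h3⟩ := exists_cutoff {x} hε
  simp only [infDist_singleton] at h2 h3
  refine ⟨φ, h1, ?_, fun z hz => h3 z ?_⟩
  · filter_upwards [Metric.ball_mem_nhds x (show 0 < ε / 4 by positivity)] with z hz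
    exact h2 z (le_of_lt hz)
  · by_contra! h
    exact hz (hεU (show dist z x < ε by linarith))

end Lipschitz

/-! ### Linked points -/

section Bisep

variable {𝕂 X Y E F : Type*} [RCLike 𝕂] [MetricSpace X] [MetricSpace Y]
    [NormedAddCommGroup E] [NormedSpace 𝕂 E] [NormedAddCommGroup F] [NormedSpace 𝕂 F]
    {T : (X → E) → (Y → F)}

namespace IsBisep

lemma map_zero (hT : IsBisep 𝕂 T) : T 0 = 0 := by
  have := hT.map_add 0 0 (IsLip.const 0) (IsLip.const 0)
  simpa using this

lemma map_sub (hT : IsBisep 𝕂 T) {f g : X → E} (hf : IsLip f) (hg : IsLip g) :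
    T (f - g) = T f - T g := by
  have := hT.map_add (f - g) g (hf.sub hg) hg
  rw [sub_add_cancel] at this
  rw [this, add_sub_cancel_right]

lemma map_ne_zero (hT : IsBisep 𝕂 T) {f : X → E} (hf : IsLip f) (h : f ≠ 0) : T f ≠ 0 :=
  fun h0 => h (hT.inj f 0 hf (IsLip.const 0) (h0.trans hT.map_zero.symm))

lemma sep' (hT : IsBisep 𝕂 T) {f g : X → E} (hf : IsLip f) (hg : IsLip g)
    (h : ∀ z, f z = 0 ∨ g z = 0) (w : Y) : T f w = 0 ∨ T g w = 0 := by
  by_contra! hw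
  have : w ∈ coz (T f) ∩ coz (T g) := hw
  rw [hT.sep f g hf hg] at this
  · exact this
  · ext z
    simp only [coz, mem_inter_iff, mem_ofPred_eq, mem_empty_iff_false, iff_false]
    rcases h z with h | h <;> simp [h]

lemma sep_inv' (hT : IsBisep 𝕂 T) {f g : X → E} (hf : IsLip f) (hg : IsLip g)
    (h : ∀ z, T f z = 0 ∨ T g z = 0) (w : X) : f w = 0 ∨ g w = 0 := by
  by_contra! hw
  have : w ∈ coz f ∩ coz g := hw
  rw [hT.sep_inv f g hf hg] at this
  · exact this
  · ext z
    simp only [coz, mem_inter_iff, mem_ofPred_eq, mem_empty_iff_false, iff_false]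
    rcases h z with h | h <;> simp [h]

/-- `T` preserves inclusion of cozero sets up to closure, since the closure of a cozero set is
determined by the functions disjoint from the given one. -/
lemma coz_subset_closed [Nontrivial F] (hT : IsBisep 𝕂 T) {f g : X → E} (hf : IsLip f)
    (hg : IsLip g) (hfg : ∀ z, f z = 0 → g z = 0) {C : Set Y} (hC : IsClosed C)
    (hfC : coz (T f) ⊆ C) : coz (T g) ⊆ C := by
  intro y hy
  by_contra hyC
  obtain ⟨u, hu⟩ := exists_ne (0 : F)
  obtain ⟨φ, hφ, hφ1, hφ0⟩ := exists_bump (hC.isOpen_compl.mem_nhds hyC)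
  obtain ⟨c, hc, hTc⟩ := hT.surj _ (hφ.ofReal_smul 𝕂 (IsLip.const u))
  have h1 : ∀ z, f z = 0 ∨ c z = 0 := by
    refine hT.sep_inv' hf hc fun z => ?_
    by_cases hz : z ∈ C
    · right; rw [hTc]; simp [hφ0 z (by simpa using hz)]
    · left; by_contra h; exact hz (hfC h)
  have h2 := hT.sep' hg hc (fun z => (h1 z).imp_left (hfg z)) y
  rw [hTc] at h2
  rcases h2 with h2 | h2
  · exact hy h2
  · simp [hφ1.self_of_nhds, hu] at h2

end IsBisep

/-- `x` and `y` are linked by `T`: arbitrarily close to `x` there live nonzero functions whose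
images under `T` live arbitrarily close to `y`. -/
def Linked (T : (X → E) → (Y → F)) (x : X) (y : Y) : Prop :=
  ∀ U ∈ 𝓝 x, ∀ V ∈ 𝓝 y, ∃ f, IsLip f ∧ f ≠ 0 ∧ coz f ⊆ U ∧ coz (T f) ⊆ V

lemma Linked.eq_zero (hT : IsBisep 𝕂 T) {x : X} {y : Y} (h : Linked T x y) {f : X → E}
    (hf : IsLip f) (hfx : ∀ᶠ z in 𝓝 x, f z = 0) : T f y = 0 := by
  have hcl : IsClosed {w | T f w = 0} :=
    isClosed_eq (hT.maps_lip f hf).continuous continuous_const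
  have : y ∈ closure {w | T f w = 0} := by
    rw [mem_closure_iff_nhds]
    intro V hV
    obtain ⟨g, hg, hg0, hgU, hgV⟩ := h _ hfx V hV
    obtain ⟨w, hw⟩ := Function.ne_iff.1 (hT.map_ne_zero hg hg0)
    refine ⟨w, hgV hw, ?_⟩
    refine (hT.sep' hf hg (fun z => ?_) w).resolve_right hw
    by_cases hz : g z = 0
    · exact Or.inr hz
    · exact Or.inl (hgU hz)
  rwa [hcl.closure_eq] at this

lemma Linked.eq_of_eventuallyEq (hT : IsBisep 𝕂 T) {x : X} {y : Y} (h : Linked T x y)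
    {f g : X → E} (hf : IsLip f) (hg : IsLip g) (hfg : ∀ᶠ z in 𝓝 x, f z = g z) :
    T f y = T g y := by
  have := h.eq_zero hT (hf.sub hg) (hfg.mono fun z hz => by simp [hz])
  rw [hT.map_sub hf hg] at this
  exact sub_eq_zero.1 this

/-- If `y` is linked to `x`, then points near `y` are linked only to points near `x`: cut the
preimage of a nonzero constant off around `x`. -/
lemma Linked.eventually_dist_lt [Nontrivial F] (hT : IsBisep 𝕂 T) {x : X} {y : Y}
    (h : Linked T x y) {ε : ℝ} (hε : 0 < ε) :
    ∀ᶠ y' in 𝓝 y, ∀ x', Linked T x' y' → dist x' x < ε := by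
  obtain ⟨u, hu⟩ := exists_ne (0 : F)
  obtain ⟨w, hw, hTw⟩ := hT.surj _ (IsLip.const u)
  obtain ⟨φ, hφ, hφ1, hφ0⟩ := exists_bump (Metric.closedBall_mem_nhds x (half_pos hε))
  have hφw := hφ.ofReal_smul 𝕂 hw
  have h1 : T (fun z => (φ z : 𝕂) • w z) y ≠ 0 := by
    rw [h.eq_of_eventuallyEq hT hφw hw (hφ1.mono fun z hz => by simp [hz]), hTw]
    exact hu
  filter_upwards [(hT.maps_lip _ hφw).continuous.continuousAt.eventually_ne h1] with y' hy' x' hx'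
  by_contra! hd
  refine hy' (hx'.eq_zero hT hφw ?_)
  have : (closedBall x (ε / 2))ᶜ ∈ 𝓝 x' := by
    refine isClosed_closedBall.isOpen_compl.mem_nhds ?_
    simp only [mem_compl_iff, mem_closedBall, not_le]
    linarith
  filter_upwards [this] with z hz
  simp [hφ0 z hz]

lemma Linked.unique [Nontrivial F] (hT : IsBisep 𝕂 T) {x x' : X} {y : Y}
    (h : Linked T x y) (h' : Linked T x' y) : x' = x := by
  refine dist_le_zero.1 (le_of_forall_pos_le_add fun ε hε => ?_)
  simpa using ((h.eventually_dist_lt hT hε).self_of_nhds x' h').le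

/-! ### Existence of linked points -/

/-- A sequence which does not visit infinitely often two sets at positive distance is Cauchy. -/
lemma cauchySeq_of_proximity {u : ℕ → X}
    (hu : ∀ (A B : Set X) (ε : ℝ), 0 < ε → (∀ a ∈ A, ∀ b ∈ B, ε ≤ dist a b) →
      (∃ᶠ n in atTop, u n ∈ A) → ¬ ∃ᶠ n in atTop, u n ∈ B) : CauchySeq u := by
  have step : ∀ ε : ℝ, 0 < ε → ∃ k, ∃ᶠ n in atTop, dist (u n) (u k) < ε := by
    intro ε hε
    by_contra! hcon
    have hcon' : ∀ k, ∀ᶠ n in atTop, ε ≤ dist (u n) (u k) := fun k => by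
      simpa [not_frequently] using hcon k
    -- Otherwise there is an `ε`-separated subsequence; split it into even and odd terms.
    obtain ⟨m, -, hm⟩ := exists_seq_of_forall_finset_exists (fun _ : ℕ => True)
      (fun i j => i < j ∧ ε ≤ dist (u j) (u i)) fun s _ => by
        have : ∀ᶠ n in atTop, ∀ i ∈ s, i < n ∧ ε ≤ dist (u n) (u i) :=
          (Finset.eventually_all s).2 fun i _ => (eventually_gt_atTop i).and (hcon' i)
        obtain ⟨n, hn⟩ := this.exists
        exact ⟨n, trivial, hn⟩
    have hmono : StrictMono m := fun i j hij => (hm i j hij).1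
    have hfreq : ∀ (g : ℕ → ℕ), StrictMono g → ∃ᶠ n in atTop, u n ∈ range fun k => u (m (g k)) := by
      intro g hg
      rw [frequently_atTop]
      exact fun N => ⟨m (g N), (hmono.comp hg).id_le N, N, rfl⟩
    refine hu (range fun k => u (m (2 * k))) (range fun k => u (m (2 * k + 1))) ε hε ?_
      (hfreq (fun k => 2 * k) fun i j h => by simpa using h)
      (hfreq (fun k => 2 * k + 1) fun i j h => by simpa using h)
    rintro _ ⟨i, rfl⟩ _ ⟨j, rfl⟩
    rcases lt_or_gt_of_ne (show 2 * i ≠ 2 * j + 1 by omega) with h | h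
    · have := (hm _ _ h).2; rwa [dist_comm] at this
    · exact (hm _ _ h).2
  rw [Metric.cauchySeq_iff']
  intro ε hε
  obtain ⟨k, hk⟩ := step (ε / 4) (by positivity)
  have := hu (ball (u k) (ε / 4)) {z | ε / 2 ≤ dist z (u k)} (ε / 4) (by positivity)
    (fun a ha b hb => by
      have h1 : dist a (u k) < ε / 4 := ha
      have h2 : ε / 2 ≤ dist b (u k) := hb
      have := dist_triangle b a (u k)
      rw [dist_comm b a] at this
      linarith) hk
  rw [not_frequently] at this
  obtain ⟨N, hN⟩ := eventually_atTop.1 this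
  refine ⟨N, fun n hn => ?_⟩
  have h1 := hN n hn
  have h2 := hN N le_rfl
  simp only [mem_ofPred_eq, not_le] at h1 h2
  have := dist_triangle_right (u n) (u N) (u k)
  linarith

lemma IsBisep.exists_linked [CompleteSpace X] [Nontrivial F] (hT : IsBisep 𝕂 T) (y : Y) :
    ∃ x, Linked T x y := by
  obtain ⟨u, hu⟩ := exists_ne (0 : F)
  obtain ⟨r, -, hr0, hr⟩ := exists_seq_strictAnti_tendsto (0 : ℝ)
  -- `f n ≠ 0` with `T (f n)` living in the ball of radius `r n` around `y`.
  have hex : ∀ n, ∃ f, IsLip f ∧ coz (T f) ⊆ closedBall y (r n) ∧ f ≠ 0 := by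
    intro n
    obtain ⟨φ, hφ, hφ1, hφ0⟩ := exists_bump (Metric.closedBall_mem_nhds y (hr0 n))
    obtain ⟨f, hf, hTf⟩ := hT.surj _ (hφ.ofReal_smul 𝕂 (IsLip.const u))
    refine ⟨f, hf, fun z hz => ?_, ?_⟩
    · by_contra hzn
      rw [hTf] at hz
      exact hz (by simp [hφ0 z hzn])
    · rintro rfl
      have := congrFun hTf y
      rw [hT.map_zero] at this
      simp [hφ1.self_of_nhds, hu, eq_comm] at this
  choose f hf hfV hf0 using hex
  choose p hp using fun n => Function.ne_iff.1 (hf0 n)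
  -- `f n` may be localized to any neighbourhood of `p n`.
  have hloc : ∀ n, ∀ U ∈ 𝓝 (p n), ∃ g, IsLip g ∧ g ≠ 0 ∧ coz g ⊆ U ∧
      coz (T g) ⊆ closedBall y (r n) := by
    intro n U hU
    obtain ⟨φ, hφ, hφ1, hφ0⟩ := exists_bump hU
    have hg := hφ.ofReal_smul 𝕂 (hf n)
    refine ⟨_, hg, Function.ne_iff.2 ⟨p n, ?_⟩, fun z hz => ?_,
      hT.coz_subset_closed (hf n) hg (fun z hz => by simp [hz]) isClosed_closedBall (hfV n)⟩
    · simpa [hφ1.self_of_nhds] using hp n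
    · by_contra hzU
      exact hz (by simp [hφ0 z hzU])
  have hkey : ∀ n (g : X → E), IsLip g → (∀ᶠ z in 𝓝 (p n), g z = 0) →
      ∃ w ∈ closedBall y (r n), T g w = 0 := by
    intro n g hg hgp
    obtain ⟨b, hb, hb0, hbU, hbV⟩ := hloc n _ hgp
    obtain ⟨w, hw⟩ := Function.ne_iff.1 (hT.map_ne_zero hb hb0)
    refine ⟨w, hbV hw, (hT.sep' hg hb (fun z => ?_) w).resolve_right hw⟩
    by_cases hz : b z = 0
    · exact Or.inr hz
    · exact Or.inl (hbU hz)
  have hkey' : ∀ (g : X → E), IsLip g → (∃ᶠ n in atTop, ∀ᶠ z in 𝓝 (p n), g z = 0) →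
      T g y = 0 := by
    intro g hg hfr
    have hcl : IsClosed {w | T g w = 0} :=
      isClosed_eq (hT.maps_lip g hg).continuous continuous_const
    have : y ∈ closure {w | T g w = 0} := by
      rw [Metric.mem_closure_iff]
      intro ε hε
      obtain ⟨n, hn, hrn⟩ := (hfr.and_eventually (hr.eventually_lt_const hε)).exists
      obtain ⟨w, hw, hTw⟩ := hkey n g hg hn
      exact ⟨w, hTw, by rw [dist_comm]; exact lt_of_le_of_lt hw hrn⟩
    rwa [hcl.closure_eq] at this
  have hcauchy : CauchySeq p := by
    refine cauchySeq_of_proximity fun A B ε hε hAB hA hB => ?_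
    have hAne : A.Nonempty := let ⟨n, hn⟩ := hA.exists; ⟨_, hn⟩
    obtain ⟨w, hw, hTw⟩ := hT.surj _ (IsLip.const u)
    obtain ⟨φ, hφ, hφ1, hφ0⟩ := exists_cutoff A hε
    have hφw := hφ.ofReal_smul 𝕂 hw
    have h1 : T (fun z => (φ z : 𝕂) • w z) y = 0 := by
      refine hkey' _ hφw (hB.mono fun n hn => ?_)
      have : ε / 2 < infDist (p n) A := by
        have : ε ≤ infDist (p n) A :=
          (le_infDist hAne).2 fun a ha => by rw [dist_comm]; exact hAB a ha _ hn
        linarith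
      filter_upwards [(continuous_infDist_pt A).continuousAt.eventually_const_lt this] with z hz
      simp [hφ0 z hz.le]
    have h2 : T (w - fun z => (φ z : 𝕂) • w z) y = 0 := by
      refine hkey' _ (hw.sub hφw) (hA.mono fun n hn => ?_)
      have : infDist (p n) A < ε / 4 := by
        rw [infDist_zero_of_mem hn]; positivity
      filter_upwards [(continuous_infDist_pt A).continuousAt.eventually_lt_const this] with z hz
      simp [hφ1 z hz.le]
    rw [hT.map_sub hw hφw, Pi.sub_apply, h1, hTw, sub_zero] at h2
    exact hu h2
  obtain ⟨x, hx⟩ := cauchySeq_tendsto_of_complete hcauchy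
  refine ⟨x, fun U hU V hV => ?_⟩
  obtain ⟨ε, hε, hεV⟩ := Metric.mem_nhds_iff.1 hV
  obtain ⟨n, hn, hrn⟩ := ((hx.eventually (eventually_mem_nhds_iff.2 hU)).and
    (hr.eventually_lt_const hε)).exists
  obtain ⟨g, hg, hg0, hgU, hgV⟩ := hloc n U hn
  exact ⟨g, hg, hg0, hgU, hgV.trans ((closedBall_subset_ball hrn).trans hεV)⟩

/-! ### Functions vanishing at a linked point -/

/-- If `f x = 0`, the cutoff `ramp (infDist z S / dist z x)` is a Lipschitz multiplier for `f`,
although it oscillates near `x`: the growth of its slope, of order `1 / dist z x`, is compensated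
by `‖f z‖ = O(dist z x)`. -/
lemma isLip_ramp_smul {f : X → E} (hf : IsLip f) {x : X} (hfx : f x = 0) {S : Set X}
    (hS : x ∈ closure S) :
    IsLip (fun z => (ramp (infDist z S / dist z x) : 𝕂) • f z) := by
  obtain ⟨K, C, hK, hC, h1, h2⟩ := hf.exists_bound
  have hSd : ∀ w, infDist w S ≤ dist w x := fun w => by
    rw [← infDist_closure]; exact infDist_le_dist_of_mem hS
  have h0 : ∀ z, ‖f z‖ ≤ K * dist z x := fun z => by simpa [hfx] using h1 z x
  have h3 : ∀ z, ‖(ramp (infDist z S / dist z x) : 𝕂) • f z‖ ≤ ‖f z‖ := fun z => by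
    rw [norm_smul, RCLike.norm_ofReal]
    exact mul_le_of_le_one_left (norm_nonneg _) (abs_ramp_le _)
  refine IsLip.of_le (K := 9 * K) (C := C) (fun z w => ?_) fun z => (h3 z).trans (h2 z)
  have hd : 0 ≤ K * dist z w := mul_nonneg hK dist_nonneg
  by_cases hw : w = x
  · subst hw
    rw [hfx, smul_zero, sub_zero]
    linarith [h3 z, h0 z]
  by_cases hz : z = x
  · subst hz
    rw [hfx, smul_zero, zero_sub, norm_neg]
    rw [dist_comm z w] at hd
    have h4 := h3 w
    have h5 := h0 w
    rw [dist_comm z w]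
    linarith
  have hz0 : 0 < dist z x := dist_pos.2 hz
  have hw0 : 0 < dist w x := dist_pos.2 hw
  have hq : |infDist z S / dist z x - infDist w S / dist w x| ≤ 2 * dist z w / dist z x := by
    have e : infDist z S / dist z x - infDist w S / dist w x
        = ((infDist z S - infDist w S) + infDist w S / dist w x * (dist w x - dist z x))
          / dist z x := by
      field_simp; ring
    rw [e, abs_div, abs_of_pos hz0]
    refine div_le_div_of_nonneg_right ?_ hz0.le
    refine (abs_add_le _ _).trans ?_
    have e1 := abs_infDist_sub_le S z w
    have e2 : |dist w x - dist z x| ≤ dist z w := by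
      rw [dist_comm z w]; exact abs_dist_sub_le w z x
    have e3 : |infDist w S / dist w x| ≤ 1 := by
      rw [abs_of_nonneg (div_nonneg infDist_nonneg hw0.le), div_le_one hw0]
      exact hSd w
    rw [abs_mul]
    have := mul_le_mul e3 e2 (abs_nonneg _) zero_le_one
    linarith
  have h4 : |ramp (infDist z S / dist z x) - ramp (infDist w S / dist w x)| * ‖f z‖
      ≤ 8 * (K * dist z w) := by
    calc _ ≤ (4 * (2 * dist z w / dist z x)) * (K * dist z x) :=
          mul_le_mul ((abs_ramp_sub_le _ _).trans (by linarith)) (h0 z) (norm_nonneg _)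
            (by positivity)
      _ = _ := by field_simp; ring
  have h5 : |ramp (infDist w S / dist w x)| * ‖f z - f w‖ ≤ K * dist z w := by
    have := mul_le_mul (abs_ramp_le (infDist w S / dist w x)) (h1 z w) (norm_nonneg _) zero_le_one
    linarith
  have := norm_ofReal_smul_sub_le 𝕂 (ramp (infDist z S / dist z x))
    (ramp (infDist w S / dist w x)) (f z) (f w)
  linarith

/-- At a linked point `T f` depends only on the value of `f`, not on its germ. When `x` is not
isolated, `f` is multiplied by an oscillating cutoff equal to `1` near infinitely many terms, and
to `0` near infinitely many other terms, of a sequence converging to `x`; the image of the product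
is continuous, so its limit along both subsequences is the same. -/
lemma IsBisep.apply_eq_zero (hT : IsBisep 𝕂 T) {k : X → Y} (hk : Continuous k)
    (hkl : ∀ x, Linked T x (k x)) {f : X → E} (hf : IsLip f) {x : X} (hfx : f x = 0) :
    T f (k x) = 0 := by
  by_cases hiso : ∀ᶠ z in 𝓝 x, z = x
  · exact (hkl x).eq_zero hT hf (hiso.mono fun z hz => hz ▸ hfx)
  obtain ⟨p, hpx, hp⟩ := exists_seq_of_forall_finset_exists (fun z : X => z ≠ x)
    (fun a b => dist b x < dist a x / 4) fun s hs => by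
      have : ∀ᶠ z in 𝓝 x, ∀ a ∈ s, dist z x < dist a x / 4 :=
        (Finset.eventually_all s).2 fun a ha =>
          Metric.ball_mem_nhds x (div_pos (dist_pos.2 (hs a ha)) (by norm_num))
      exact ((not_eventually.1 hiso).and_eventually this).exists
  have hpos : ∀ n, 0 < dist (p n) x := fun n => dist_pos.2 (hpx n)
  have hgeom : ∀ n, dist (p n) x ≤ dist (p 0) x * (1 / 4) ^ n := by
    intro n
    induction n with
    | zero => simp
    | succ n ih => rw [pow_succ]; linarith [hp n (n + 1) n.lt_succ_self]
  have hlim : Tendsto p atTop (𝓝 x) := by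
    rw [tendsto_iff_dist_tendsto_zero]
    refine squeeze_zero (fun n => dist_nonneg) hgeom ?_
    simpa using (tendsto_pow_atTop_nhds_zero_of_lt_one (r := (1 / 4 : ℝ)) (by norm_num)
      (by norm_num)).const_mul (dist (p 0) x)
  have hlim0 : Tendsto (fun n => p (2 * n)) atTop (𝓝 x) :=
    hlim.comp (StrictMono.tendsto_atTop fun i j h => by simpa using h)
  have hlim1 : Tendsto (fun n => p (2 * n + 1)) atTop (𝓝 x) :=
    hlim.comp (StrictMono.tendsto_atTop (φ := fun n => 2 * n + 1) fun i j h => by simpa using h)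
  set S : Set X := range fun n => p (2 * n) with hS
  have hxS : x ∈ closure S :=
    mem_closure_of_tendsto hlim0 (Eventually.of_forall fun n => mem_range_self n)
  have hcont : ∀ n, ContinuousAt (fun z => infDist z S / dist z x) (p n) := fun n =>
    (continuous_infDist_pt S).continuousAt.div (by fun_prop) (hpos n).ne'
  have hg := isLip_ramp_smul (𝕂 := 𝕂) hf hfx hxS
  set g : X → E := fun z => (ramp (infDist z S / dist z x) : 𝕂) • f z with hgdef
  have heven : ∀ n, T g (k (p (2 * n))) = T f (k (p (2 * n))) := by
    intro n
    refine (hkl _).eq_of_eventuallyEq hT hg hf ?_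
    have : infDist (p (2 * n)) S / dist (p (2 * n)) x < 1 / 4 := by
      rw [infDist_zero_of_mem (show p (2 * n) ∈ S from mem_range_self n)]; norm_num
    filter_upwards [(hcont _).eventually_lt_const this] with z hz
    simp [hgdef, ramp_eq_one hz.le]
  have hodd : ∀ n, T g (k (p (2 * n + 1))) = 0 := by
    intro n
    refine (hkl _).eq_zero hT hg ?_
    have : 1 / 2 < infDist (p (2 * n + 1)) S / dist (p (2 * n + 1)) x := by
      rw [lt_div_iff₀ (hpos _)]
      have h34 : 3 / 4 * dist (p (2 * n + 1)) x ≤ infDist (p (2 * n + 1)) S := by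
        refine (le_infDist (range_nonempty _)).2 ?_
        rintro _ ⟨j, rfl⟩
        rcases lt_or_gt_of_ne (show 2 * j ≠ 2 * n + 1 by omega) with h | h
        · have h1 := hp _ _ h
          have h2 := dist_triangle_left (p (2 * j)) x (p (2 * n + 1))
          linarith [hpos (2 * n + 1)]
        · have h1 := hp _ _ h
          have h2 := dist_triangle (p (2 * n + 1)) (p (2 * j)) x
          linarith
      linarith [hpos (2 * n + 1)]
    filter_upwards [(hcont _).eventually_const_lt this] with z hz
    simp [hgdef, ramp_eq_zero hz.le]
  have hTg := (hT.maps_lip g hg).continuous.comp hk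
  have hTf := (hT.maps_lip f hf).continuous.comp hk
  have h1 : T g (k x) = T f (k x) :=
    tendsto_nhds_unique ((hTg.tendsto x).comp hlim0)
      (((hTf.tendsto x).comp hlim0).congr fun n => (heven n).symm)
  have h2 : T g (k x) = 0 :=
    tendsto_nhds_unique ((hTg.tendsto x).comp hlim1)
      (tendsto_const_nhds.congr fun n => (hodd n).symm)
  rw [← h1, h2]

/-! ### The inverse map and the representation -/

/-- The inverse of a biseparating map on bounded Lipschitz functions, extended by `0` to all other
functions. -/
noncomputable def IsBisep.inverse (hT : IsBisep 𝕂 T) (g : Y → F) : X → E :=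
  open Classical in if hg : IsLip g then (hT.surj g hg).choose else 0

namespace IsBisep

lemma isLip_inverse (hT : IsBisep 𝕂 T) {g : Y → F} (hg : IsLip g) : IsLip (hT.inverse g) := by
  rw [inverse, dif_pos hg]; exact (hT.surj g hg).choose_spec.1

lemma map_inverse (hT : IsBisep 𝕂 T) {g : Y → F} (hg : IsLip g) : T (hT.inverse g) = g := by
  rw [inverse, dif_pos hg]; exact (hT.surj g hg).choose_spec.2

lemma inverse_map (hT : IsBisep 𝕂 T) {f : X → E} (hf : IsLip f) : hT.inverse (T f) = f :=
  hT.inj _ _ (hT.isLip_inverse (hT.maps_lip f hf)) hf (hT.map_inverse (hT.maps_lip f hf))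

lemma isBisep_inverse (hT : IsBisep 𝕂 T) : IsBisep 𝕂 hT.inverse where
  maps_lip g hg := hT.isLip_inverse hg
  map_add f g hf hg := by
    refine hT.inj _ _ (hT.isLip_inverse (hf.add hg))
      ((hT.isLip_inverse hf).add (hT.isLip_inverse hg)) ?_
    rw [hT.map_add _ _ (hT.isLip_inverse hf) (hT.isLip_inverse hg), hT.map_inverse hf,
      hT.map_inverse hg, hT.map_inverse (hf.add hg)]
  map_smul c f hf := by
    refine hT.inj _ _ (hT.isLip_inverse (hf.const_smul c)) ((hT.isLip_inverse hf).const_smul c) ?_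
    rw [hT.map_smul _ _ (hT.isLip_inverse hf), hT.map_inverse hf,
      hT.map_inverse (hf.const_smul c)]
  inj f g hf hg h := by rw [← hT.map_inverse hf, h, hT.map_inverse hg]
  surj f hf := ⟨T f, hT.maps_lip f hf, hT.inverse_map hf⟩
  sep f g hf hg h := by
    refine hT.sep_inv _ _ (hT.isLip_inverse hf) (hT.isLip_inverse hg) ?_
    rwa [hT.map_inverse hf, hT.map_inverse hg]
  sep_inv f g hf hg h := by
    have := hT.sep _ _ (hT.isLip_inverse hf) (hT.isLip_inverse hg) h
    rwa [hT.map_inverse hf, hT.map_inverse hg] at this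

lemma linked_inverse (hT : IsBisep 𝕂 T) {x : X} {y : Y} (h : Linked T x y) :
    Linked hT.inverse y x := by
  intro V hV U hU
  obtain ⟨f, hf, hf0, hfU, hfV⟩ := h U hU V hV
  exact ⟨T f, hT.maps_lip f hf, hT.map_ne_zero hf hf0, hfV, by rwa [hT.inverse_map hf]⟩

lemma linked_of_inverse (hT : IsBisep 𝕂 T) {x : X} {y : Y} (h : Linked hT.inverse y x) :
    Linked T x y := by
  intro U hU V hV
  obtain ⟨g, hg, hg0, hgV, hgU⟩ := h V hV U hU
  exact ⟨hT.inverse g, hT.isLip_inverse hg, hT.isBisep_inverse.map_ne_zero hg hg0, hgU,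
    by rwa [hT.map_inverse hg]⟩

lemma continuous_of_linked [Nontrivial F] (hT : IsBisep 𝕂 T) {h : Y → X}
    (hh : ∀ y, Linked T (h y) y) : Continuous h :=
  continuous_iff_continuousAt.2 fun y => Metric.tendsto_nhds.2 fun _ hε =>
    ((hh y).eventually_dist_lt hT hε).mono fun y' hy' => hy' _ (hh y')

/-- The linked points form the graph of a homeomorphism. -/
lemma exists_homeomorph [CompleteSpace X] [CompleteSpace Y] [Nontrivial E] [Nontrivial F]
    (hT : IsBisep 𝕂 T) : ∃ h : Y ≃ₜ X, ∀ y, Linked T (h y) y := by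
  choose h hh using hT.exists_linked
  choose k hk using hT.isBisep_inverse.exists_linked
  exact ⟨{ toFun := h
           invFun := k
           left_inv := fun y => (hT.linked_inverse (hh y)).unique hT.isBisep_inverse (hk (h y))
           right_inv := fun x => (hT.linked_of_inverse (hk x)).unique hT (hh (k x))
           continuous_toFun := hT.continuous_of_linked hh
           continuous_invFun := hT.isBisep_inverse.continuous_of_linked hk }, hh⟩

lemma apply_eq_apply_const (hT : IsBisep 𝕂 T) {h : Y ≃ₜ X} (hh : ∀ y, Linked T (h y) y)
    {f : X → E} (hf : IsLip f) (y : Y) : T f y = T (fun _ => f (h y)) y := by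
  have hc : IsLip fun _ : X => f (h y) := IsLip.const _
  have := hT.apply_eq_zero h.symm.continuous (fun x => by simpa using hh (h.symm x))
    (hf.sub hc) (x := h y) (by simp)
  rw [hT.map_sub hf hc, Homeomorph.symm_apply_apply] at this
  exact sub_eq_zero.1 this

end IsBisep

end Bisep

/-- Every linear biseparating map `T : Lip(X,E) → Lip(Y,F)` is represented by
a homeomorphism `h : Y → X` together with the linear bijections `J y : e ↦ (T ê) y`, via
`(T f) y = J y (f (h y))`. -/
theorem biseparating_representation_homeomorph
    {𝕂 X Y E F : Type*} [RCLike 𝕂]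
    [MetricSpace X] [CompleteSpace X] [MetricSpace Y] [CompleteSpace Y]
    [NormedAddCommGroup E] [NormedSpace 𝕂 E] [Nontrivial E]
    [NormedAddCommGroup F] [NormedSpace 𝕂 F] [Nontrivial F]
    (hXb : IsBounded (univ : Set X)) (hYb : IsBounded (univ : Set Y))
    (T : (X → E) → (Y → F)) (hT : IsBisep 𝕂 T) :
    ∃ h : Y → X, IsHomeomorph h ∧
      (∀ y : Y, IsLinearMap 𝕂 (fun e : E => T (fun _ => e) y) ∧
        Bijective (fun e : E => T (fun _ => e) y)) ∧
      ∀ f, IsLip f → ∀ y, T f y = T (fun _ => f (h y)) y := by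
  obtain ⟨h, hh⟩ := hT.exists_homeomorph
  have hrep : ∀ f, IsLip f → ∀ y, T f y = T (fun _ => f (h y)) y :=
    fun f hf y => hT.apply_eq_apply_const hh hf y
  refine ⟨h, h.isHomeomorph, fun y => ⟨⟨fun a b => ?_, fun c a => ?_⟩, fun a b hab => ?_,
    fun u => ?_⟩, hrep⟩
  · exact congrFun (hT.map_add _ _ (IsLip.const a) (IsLip.const b)) y
  · exact congrFun (hT.map_smul c _ (IsLip.const a)) y
  · -- Both constants are recovered at `h y` by the representation of `T⁻¹`, whose homeomorphism
    -- is `h.symm`.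
    have hinv : ∀ e : E, e = hT.inverse (fun _ => T (fun _ => e) y) (h y) := fun e => by
      have := hT.isBisep_inverse.apply_eq_apply_const (h := h.symm)
        (fun x => hT.linked_inverse (by simpa using hh (h.symm x)))
        (hT.maps_lip _ (IsLip.const e)) (h y)
      rwa [hT.inverse_map (IsLip.const e), Homeomorph.symm_apply_apply] at this
    have hab' : T (fun _ => a) y = T (fun _ => b) y := hab
    rw [hinv a, hab', ← hinv b]
  · have hu : IsLip fun _ : Y => u := IsLip.const u
    refine ⟨hT.inverse (fun _ => u) (h y), ?_⟩
    change T (fun _ => hT.inverse (fun _ => u) (h y)) y = u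
    rw [← hrep _ (hT.isLip_inverse hu) y, hT.map_inverse hu]
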